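/- Fix α ∈ (0,π). For every ε > 0 there exists δ > 0 such that: whenever 0 < w < δ and L ∈ (0,∞) are such that there exists a translator u : P(α,w,L) → ℝ with boundary value −∞ at every point of the horizontal sides of P(α,w,L) and +∞ at every point of the nonhorizontal sides, then |w/L − sin α| < ε. (In other words, w/L(α,w) → sin α as w → 0, where L(α,w) is the unique such side length.) -/

import Mathlib

/-!
Write `W = √(1 + |∇u|²)` and `X = ∇u / W`, so that `|X| < 1`. The translator equation says
`div X = 1 / W ∈ (0, 1]`. The flux of `X` out of a side on which `u = ±∞` is `±` the length of that
side, so on a parallelogram with Scherk boundary values the divergence theorem gives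
`|2 w / sin α - 2 L| ≤ L w`, that is, `|w / L - sin α| ≤ (w sin α) / 2`. Only a bound on the mean
curvature `div X` matters.

For the flux through a side on which `u = +∞`, let `n` be the outward unit normal, `φ` a smooth step
from `0` to `1`, and put `F = X + φ(u - k) (n - X)`. Since `∇u · n ≤ W` and `∇u · X = W - 1 / W`,
the divergence of `F` is bounded above independently of `k`. Apply the divergence theorem to `F` on
the thin box between the side and its translate at distance `r`, with the corners cut off: close to
the side `F = n`, and on the translate `F = X` once `k` is large. So the flux of `X` through the
translate differs from the length of the side by `O(r)`.
-/

open Real Filter MeasureTheory Set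

noncomputable section

/-- Partial derivative with respect to the first variable. -/
def pdx (u : ℝ × ℝ → ℝ) (p : ℝ × ℝ) : ℝ := fderiv ℝ u p (1, 0)

/-- Partial derivative with respect to the second variable. -/
def pdy (u : ℝ × ℝ → ℝ) (p : ℝ × ℝ) : ℝ := fderiv ℝ u p (0, 1)

/-- `u` is a smooth solution of the translator equation
`(1 + u_y²)u_xx − 2u_x u_y u_xy + (1 + u_x²)u_yy = 1 + u_x² + u_y²` on `Ω`. -/
def IsTranslatorOn (Ω : Set (ℝ × ℝ)) (u : ℝ × ℝ → ℝ) : Prop :=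
  ContDiffOn ℝ (⊤ : ℕ∞) u Ω ∧
  ∀ p ∈ Ω,
    (1 + (pdy u p) ^ 2) * pdx (pdx u) p
      - 2 * pdx u p * pdy u p * pdy (pdx u) p
      + (1 + (pdx u p) ^ 2) * pdy (pdy u) p
    = 1 + (pdx u p) ^ 2 + (pdy u p) ^ 2

/-- The open parallelogram `P(α, w, L)`. -/
def Pgram (α w L : ℝ) : Set (ℝ × ℝ) :=
  {p | 0 < p.2 ∧ p.2 < w ∧
       p.2 * Real.cos α / Real.sin α < p.1 ∧
       p.1 < L + p.2 * Real.cos α / Real.sin α}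

/-- `u` is a translator on `P(α,w,L)` with boundary value `−∞` at every point of the
horizontal sides and `+∞` at every point of the nonhorizontal sides. -/
def ScherkBVP (α w L : ℝ) (u : ℝ × ℝ → ℝ) : Prop :=
  IsTranslatorOn (Pgram α w L) u ∧
  (∀ x : ℝ, 0 < x → x < L →
      Tendsto u (nhdsWithin (x, 0) (Pgram α w L)) atBot) ∧
  (∀ x : ℝ, w * Real.cos α / Real.sin α < x → x < L + w * Real.cos α / Real.sin α →
      Tendsto u (nhdsWithin (x, w) (Pgram α w L)) atBot) ∧
  (∀ y : ℝ, 0 < y → y < w →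
      Tendsto u (nhdsWithin (y * Real.cos α / Real.sin α, y) (Pgram α w L)) atTop) ∧
  (∀ y : ℝ, 0 < y → y < w →
      Tendsto u (nhdsWithin (L + y * Real.cos α / Real.sin α, y) (Pgram α w L)) atTop)

/-- The region `Ω(α, w)`: a "parallelogram" whose right-hand side is at infinity. -/
def OmegaReg (α w : ℝ) : Set (ℝ × ℝ) :=
  {p | 0 < p.2 ∧ p.2 < w ∧ p.2 * Real.cos α / Real.sin α < p.1}

/-- `u` is a translator on `Ω(α,w)` with boundary value `−∞` at every point of the two
horizontal edges and `+∞` at every point of the nonhorizontal edge. -/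
def ScherkenoidBVP (α w : ℝ) (u : ℝ × ℝ → ℝ) : Prop :=
  IsTranslatorOn (OmegaReg α w) u ∧
  (∀ x : ℝ, 0 < x → Tendsto u (nhdsWithin (x, 0) (OmegaReg α w)) atBot) ∧
  (∀ x : ℝ, w * Real.cos α / Real.sin α < x →
      Tendsto u (nhdsWithin (x, w) (OmegaReg α w)) atBot) ∧
  (∀ y : ℝ, 0 < y → y < w →
      Tendsto u (nhdsWithin (y * Real.cos α / Real.sin α, y) (OmegaReg α w)) atTop)

/-- The full strip `ℝ × (0, w)`. -/
def TStrip (w : ℝ) : Set (ℝ × ℝ) := {p | 0 < p.2 ∧ p.2 < w}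

/-- The half strip `(0,∞) × (0, w)`. -/
def THalfStrip (w : ℝ) : Set (ℝ × ℝ) := {p | 0 < p.1 ∧ 0 < p.2 ∧ p.2 < w}

/-- A pitchfork function of width `w`: a translator on `ℝ × (0,w)` with boundary value
`+∞` at `(x,0)` for `x < 0`, `−∞` at `(x,0)` for `x > 0`, and `−∞` at `(x,w)` for all `x`. -/
def IsPitchfork (w : ℝ) (u : ℝ × ℝ → ℝ) : Prop :=
  IsTranslatorOn (TStrip w) u ∧
  (∀ x : ℝ, x < 0 → Tendsto u (nhdsWithin (x, 0) (TStrip w)) atTop) ∧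
  (∀ x : ℝ, 0 < x → Tendsto u (nhdsWithin (x, 0) (TStrip w)) atBot) ∧
  (∀ x : ℝ, Tendsto u (nhdsWithin (x, w) (TStrip w)) atBot)

/-- The downward-tilted grim reaper `g_w` of width `w ≥ π`, normalized by `g_w(0,w/2) = 0`. -/
def grimTilt (w : ℝ) (p : ℝ × ℝ) : ℝ :=
  (w / π) ^ 2 * Real.log (Real.sin (π * p.2 / w)) - p.1 * Real.sqrt ((w / π) ^ 2 - 1)

section

open scoped Topology

/-! ### Plane vectors and parallelograms -/

/-- The Euclidean norm of a plane vector; Mathlib's `‖v‖` on `ℝ × ℝ` is the sup norm. -/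
def euclNorm (v : ℝ × ℝ) : ℝ := √(v.1 ^ 2 + v.2 ^ 2)

/-- The determinant of a pair of plane vectors. For `v ≠ 0` the number `cross n v` is the inner
product of `n` with `v` turned clockwise by a right angle. -/
def cross (v w : ℝ × ℝ) : ℝ := v.1 * w.2 - v.2 * w.1

/-- The affine parametrization of the plane by which the unit square becomes the parallelogram with
vertex `p` and edge vectors `v`, `w`. -/
def frame (p v w q : ℝ × ℝ) : ℝ × ℝ := p + q.1 • v + q.2 • w

lemma euclNorm_sq (v : ℝ × ℝ) : euclNorm v ^ 2 = v.1 ^ 2 + v.2 ^ 2 := sq_sqrt (by positivity)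

lemma euclNorm_nonneg (v : ℝ × ℝ) : 0 ≤ euclNorm v := sqrt_nonneg _

lemma euclNorm_neg (v : ℝ × ℝ) : euclNorm (-v) = euclNorm v := by simp [euclNorm]

lemma euclNorm_smul (c : ℝ) (v : ℝ × ℝ) : euclNorm (c • v) = |c| * euclNorm v := by
  rw [euclNorm, euclNorm, ← sqrt_sq_eq_abs, ← sqrt_mul (sq_nonneg c)]
  simp only [Prod.smul_fst, Prod.smul_snd, smul_eq_mul]
  ring_nf

lemma cross_smul_right (c : ℝ) (v w : ℝ × ℝ) : cross v (c • w) = c * cross v w := by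
  simp only [cross, Prod.smul_fst, Prod.smul_snd, smul_eq_mul]
  ring

lemma cross_smul_smul (a b : ℝ) (v w : ℝ × ℝ) : cross (a • v) (b • w) = a * b * cross v w := by
  simp only [cross, Prod.smul_fst, Prod.smul_snd, smul_eq_mul]
  ring

lemma cross_rotate (v w : ℝ × ℝ) : cross w (-v) = cross v w := by
  simp only [cross, Prod.fst_neg, Prod.snd_neg]
  ring

lemma abs_cross_le (v w : ℝ × ℝ) : |cross v w| ≤ euclNorm v * euclNorm w := by
  rw [euclNorm, euclNorm, ← sqrt_mul (by positivity)]
  refine abs_le_sqrt ?_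
  rw [cross]
  nlinarith [sq_nonneg (v.1 * w.1 + v.2 * w.2)]

lemma exists_cross_eq_euclNorm (v : ℝ × ℝ) : ∃ n, euclNorm n ≤ 1 ∧ cross n v = euclNorm v := by
  refine ⟨(euclNorm v)⁻¹ • (v.2, -v.1), ?_, ?_⟩
  · have hrot : euclNorm (v.2, -v.1) = euclNorm v := by simp [euclNorm, add_comm]
    rw [euclNorm_smul, hrot, abs_of_nonneg (inv_nonneg.2 (euclNorm_nonneg v))]
    exact inv_mul_le_one
  · have h : cross ((euclNorm v)⁻¹ • (v.2, -v.1)) v = (euclNorm v)⁻¹ * euclNorm v ^ 2 := by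
      simp only [cross, Prod.smul_mk, smul_eq_mul, euclNorm_sq]
      ring
    rw [h, sq, ← mul_assoc, inv_mul_mul_self]

lemma continuous_frame (p v w : ℝ × ℝ) : Continuous (frame p v w) := by
  unfold frame; fun_prop

lemma frame_frame (p v w : ℝ × ℝ) (a b c d s t : ℝ) :
    frame (frame p v w (a, b)) (c • v) (d • w) (s, t) = frame p v w (a + s * c, b + t * d) := by
  simp only [frame]; module

lemma mapsTo_frame_frame {p v w : ℝ × ℝ} {Ω : Set (ℝ × ℝ)} {a b c d : ℝ}
    (h : MapsTo (frame p v w) (Ioo 0 1 ×ˢ Ioo 0 1) Ω) (ha : 0 < a) (hb : 0 < b) (hc : 0 ≤ c)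
    (hd : 0 ≤ d) (hac : a + c < 1) (hbd : b + d < 1) :
    MapsTo (frame (frame p v w (a, b)) (c • v) (d • w)) (Icc 0 1) Ω := by
  rintro ⟨s, t⟩ ⟨⟨hs, ht⟩, hs', ht'⟩
  rw [frame_frame]
  have hsc : s * c ≤ c := mul_le_of_le_one_left hc hs'
  have htd : t * d ≤ d := mul_le_of_le_one_left hd ht'
  exact h ⟨⟨add_pos_of_pos_of_nonneg ha (mul_nonneg hs hc), by linarith⟩,
    add_pos_of_pos_of_nonneg hb (mul_nonneg ht hd), by linarith⟩

lemma frame_rotate (p v w : ℝ × ℝ) (s t : ℝ) :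
    frame (p + v) w (-v) (s, t) = frame p v w (1 - t, s) := by
  simp only [frame]; module

lemma mapsTo_frame_rotate {p v w : ℝ × ℝ} {Ω : Set (ℝ × ℝ)}
    (h : MapsTo (frame p v w) (Ioo 0 1 ×ˢ Ioo 0 1) Ω) :
    MapsTo (frame (p + v) w (-v)) (Ioo 0 1 ×ˢ Ioo 0 1) Ω := by
  rintro ⟨s, t⟩ ⟨hs, ht⟩
  rw [frame_rotate]
  exact h ⟨⟨by linarith [ht.2], by linarith [ht.1]⟩, hs⟩

/-! ### The divergence theorem on a parallelogram -/

/-- The divergence of a plane vector field. -/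
def divergence (F : ℝ × ℝ → ℝ × ℝ) (p : ℝ × ℝ) : ℝ :=
  (fderiv ℝ F p (1, 0)).1 + (fderiv ℝ F p (0, 1)).2

/-- The flux of `F` across the segment from `p` to `p + v`, from its left to its right. -/
def flux (F : ℝ × ℝ → ℝ × ℝ) (p v : ℝ × ℝ) : ℝ := ∫ t in (0 : ℝ)..1, cross (F (p + t • v)) v

/-- The flux of `F` across the boundary of the parallelogram with vertex `p` and edge vectors `v`,
`w`, traversed in the order `p`, `p + v`, `p + v + w`, `p + w`. It is the outward flux if
`0 < cross v w`. -/
def boundaryFlux (F : ℝ × ℝ → ℝ × ℝ) (p v w : ℝ × ℝ) : ℝ :=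
  flux F p v + flux F (p + v) w + flux F (p + v + w) (-v) + flux F (p + w) (-w)

lemma flux_congr {F G : ℝ × ℝ → ℝ × ℝ} {p v : ℝ × ℝ}
    (h : ∀ t ∈ Icc (0 : ℝ) 1, F (p + t • v) = G (p + t • v)) : flux F p v = flux G p v :=
  intervalIntegral.integral_congr fun t ht => by
    simp only [h t (by rwa [uIcc_of_le zero_le_one] at ht)]

lemma flux_const (n p v : ℝ × ℝ) : flux (fun _ => n) p v = cross n v := by simp [flux]

lemma flux_neg_field (F : ℝ × ℝ → ℝ × ℝ) (p v : ℝ × ℝ) : flux (-F) p v = -flux F p v := by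
  rw [flux, flux, ← intervalIntegral.integral_neg]
  congr! 2 with t
  simp only [cross, Pi.neg_apply, Prod.fst_neg, Prod.snd_neg]
  ring

lemma flux_reverse (F : ℝ × ℝ → ℝ × ℝ) (p v : ℝ × ℝ) : flux F (p + v) (-v) = -flux F p v := by
  have h := intervalIntegral.integral_comp_sub_left (a := 0) (b := 1)
    (fun t => cross (F (p + t • v)) v) 1
  rw [sub_self, sub_zero] at h
  rw [flux, flux, ← h, ← intervalIntegral.integral_neg]
  congr! 2 with t
  rw [show p + v + t • -v = p + (1 - t) • v by module]
  simp only [cross, Prod.fst_neg, Prod.snd_neg]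
  ring

lemma boundaryFlux_frame (F : ℝ × ℝ → ℝ × ℝ) (p v w : ℝ × ℝ) (r : ℝ) :
    boundaryFlux F (frame p v w (r, r)) ((1 - 2 * r) • v) ((1 - 2 * r) • w) =
      flux F (frame p v w (r, r)) ((1 - 2 * r) • v) +
      flux F (frame p v w (1 - r, r)) ((1 - 2 * r) • w) +
      flux F (frame p v w (1 - r, 1 - r)) (-((1 - 2 * r) • v)) +
      flux F (frame p v w (r, 1 - r)) (-((1 - 2 * r) • w)) := by
  have h₁ : frame p v w (r, r) + (1 - 2 * r) • v = frame p v w (1 - r, r) := by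
    simp only [frame]; module
  have h₂ : frame p v w (1 - r, r) + (1 - 2 * r) • w = frame p v w (1 - r, 1 - r) := by
    simp only [frame]; module
  have h₃ : frame p v w (r, r) + (1 - 2 * r) • w = frame p v w (r, 1 - r) := by
    simp only [frame]; module
  rw [boundaryFlux, h₁, h₂, h₃]

lemma abs_flux_le {F : ℝ × ℝ → ℝ × ℝ} {p v : ℝ × ℝ} {M : ℝ}
    (h : ∀ t ∈ Icc (0 : ℝ) 1, |cross (F (p + t • v)) v| ≤ M) : |flux F p v| ≤ M := by
  simpa [flux] using intervalIntegral.norm_integral_le_of_norm_le_const (a := 0) (b := 1)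
    (f := fun t : ℝ => cross (F (p + t • v)) v) (C := M)
    fun t ht => h t (by rw [uIoc_of_le zero_le_one] at ht; exact Ioc_subset_Icc_self ht)

lemma map_eq_smul_add_smul {R M F : Type*} [Semiring R] [AddCommMonoid M] [Module R M]
    [FunLike F (R × R) M] [LinearMapClass F R (R × R) M] (l : F) (v : R × R) :
    l v = v.1 • l (1, 0) + v.2 • l (0, 1) := by
  rw [← map_smul, ← map_smul, ← map_add]
  simp

lemma cross_map_add_cross_map {F : Type*} [FunLike F (ℝ × ℝ) (ℝ × ℝ)]
    [LinearMapClass F ℝ (ℝ × ℝ) (ℝ × ℝ)] (l : F) (v w : ℝ × ℝ) :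
    cross (l v) w + cross v (l w) = ((l (1, 0)).1 + (l (0, 1)).2) * cross v w := by
  rw [map_eq_smul_add_smul l v, map_eq_smul_add_smul l w]
  simp only [cross, Prod.fst_add, Prod.snd_add, Prod.smul_fst, Prod.smul_snd, smul_eq_mul]
  ring

section CrossDeriv

variable {E : Type*} [NormedAddCommGroup E] [NormedSpace ℝ E] {F G : E → ℝ × ℝ} {q : E}

lemma differentiableAt_cross (hF : DifferentiableAt ℝ F q) (hG : DifferentiableAt ℝ G q) :
    DifferentiableAt ℝ (fun q => cross (F q) (G q)) q := by
  unfold cross; fun_prop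

lemma fderiv_cross (hF : DifferentiableAt ℝ F q) (hG : DifferentiableAt ℝ G q) (e : E) :
    fderiv ℝ (fun q => cross (F q) (G q)) q e =
      cross (fderiv ℝ F q e) (G q) + cross (F q) (fderiv ℝ G q e) := by
  have h : HasFDerivAt (fun q => cross (F q) (G q)) _ q :=
    (hF.hasFDerivAt.fst.mul hG.hasFDerivAt.snd).sub (hF.hasFDerivAt.snd.mul hG.hasFDerivAt.fst)
  rw [h.fderiv]
  simp only [cross, add_apply, sub_apply, smul_apply, smul_eq_mul,
    ContinuousLinearMap.comp_apply, ContinuousLinearMap.coe_fst', ContinuousLinearMap.coe_snd']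
  ring

end CrossDeriv

lemma hasFDerivAt_frame (p v w q : ℝ × ℝ) :
    HasFDerivAt (frame p v w) ((ContinuousLinearMap.fst ℝ ℝ ℝ).smulRight v +
      (ContinuousLinearMap.snd ℝ ℝ ℝ).smulRight w) q :=
  ((hasFDerivAt_fst.smul_const v).const_add p).add (hasFDerivAt_snd.smul_const w)

/-- The field `F` has components `cross F w / cross v w` and `cross v F / cross v w` in the
coordinates `frame p v w`. -/
lemma fderiv_cross_comp_frame_add {F : ℝ × ℝ → ℝ × ℝ} {p v w q : ℝ × ℝ}
    (hF : DifferentiableAt ℝ F (frame p v w q)) :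
    fderiv ℝ (fun q => cross (F (frame p v w q)) w) q (1, 0) +
        fderiv ℝ (fun q => cross v (F (frame p v w q))) q (0, 1) =
      divergence F (frame p v w q) * cross v w := by
  have h : HasFDerivAt (fun q => F (frame p v w q)) _ q :=
    hF.hasFDerivAt.comp q (hasFDerivAt_frame p v w q)
  have hd := h.differentiableAt
  rw [fderiv_cross hd (differentiableAt_const w), fderiv_cross (differentiableAt_const v) hd,
    h.fderiv, divergence, ← cross_map_add_cross_map]
  simp [cross]

section DivergenceTheorem

variable {Ω : Set (ℝ × ℝ)} {F : ℝ × ℝ → ℝ × ℝ} {p v w : ℝ × ℝ}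

lemma continuousOn_divergence (hΩ : IsOpen Ω) (hF : ContDiffOn ℝ 1 F Ω) :
    ContinuousOn (divergence F) Ω := by
  have h := hF.continuousOn_fderiv_of_isOpen hΩ le_rfl
  exact (continuousOn_fst.comp (h.clm_apply continuousOn_const) (mapsTo_univ _ _)).add
    (h.clm_apply continuousOn_const).snd

lemma integrableOn_divergence_comp_frame (hΩ : IsOpen Ω) (hF : ContDiffOn ℝ 1 F Ω)
    (hmaps : MapsTo (frame p v w) (Icc 0 1) Ω) :
    IntegrableOn (fun q => divergence F (frame p v w q) * cross v w) (Icc 0 1) :=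
  (((continuousOn_divergence hΩ hF).comp (continuous_frame p v w).continuousOn hmaps).mul
    continuousOn_const).integrableOn_compact isCompact_Icc

lemma boundaryFlux_eq_integral_divergence (hΩ : IsOpen Ω) (hF : ContDiffOn ℝ 1 F Ω)
    (hmaps : MapsTo (frame p v w) (Icc 0 1) Ω) :
    boundaryFlux F p v w =
      ∫ q in Icc (0 : ℝ × ℝ) 1, divergence F (frame p v w q) * cross v w := by
  have hdiff : ∀ q ∈ Icc (0 : ℝ × ℝ) 1, DifferentiableAt ℝ F (frame p v w q) := fun q hq =>
    (hF.contDiffAt (hΩ.mem_nhds (hmaps hq))).differentiableAt one_ne_zero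
  have hcomp : ∀ q ∈ Icc (0 : ℝ × ℝ) 1, DifferentiableAt ℝ (fun q => F (frame p v w q)) q :=
    fun q hq => (hdiff q hq).comp q (hasFDerivAt_frame p v w q).differentiableAt
  have h₁ : ∀ q ∈ Icc (0 : ℝ × ℝ) 1, DifferentiableAt ℝ (fun q => cross (F (frame p v w q)) w) q :=
    fun q hq => differentiableAt_cross (hcomp q hq) (differentiableAt_const w)
  have h₂ : ∀ q ∈ Icc (0 : ℝ × ℝ) 1, DifferentiableAt ℝ (fun q => cross v (F (frame p v w q))) q :=
    fun q hq => differentiableAt_cross (differentiableAt_const v) (hcomp q hq)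
  have hdiv : EqOn (fun q => divergence F (frame p v w q) * cross v w)
      (fun q => fderiv ℝ (fun q => cross (F (frame p v w q)) w) q (1, 0) +
        fderiv ℝ (fun q => cross v (F (frame p v w q))) q (0, 1)) (Icc 0 1) :=
    fun q hq => (fderiv_cross_comp_frame_add (hdiff q hq)).symm
  have hIoo : Ioo (0 : ℝ) 1 ×ˢ Ioo (0 : ℝ) 1 ⊆ Icc 0 1 := fun q hq =>
    ⟨⟨hq.1.1.le, hq.2.1.le⟩, ⟨hq.1.2.le, hq.2.2.le⟩⟩
  rw [setIntegral_congr_fun measurableSet_Icc hdiv,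
    integral_divergence_prod_Icc_of_hasFDerivAt_of_le
      (fun q => cross (F (frame p v w q)) w) (fun q => cross v (F (frame p v w q))) _ _ 0 1
      zero_le_one (fun q hq => (h₁ q hq).continuousAt.continuousWithinAt)
      (fun q hq => (h₂ q hq).continuousAt.continuousWithinAt)
      (fun q hq => (h₁ q (hIoo hq)).hasFDerivAt) (fun q hq => (h₂ q (hIoo hq)).hasFDerivAt)
      ((integrableOn_divergence_comp_frame hΩ hF hmaps).congr_fun hdiv measurableSet_Icc)]
  have hswap : ∀ z, cross v (F z) = -cross (F z) v := fun z => by simp only [cross]; ring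
  rw [boundaryFlux, add_right_comm p v w, flux_reverse, flux_reverse]
  simp only [flux, frame, hswap, intervalIntegral.integral_neg, Prod.fst_zero, Prod.snd_zero,
    Prod.fst_one, Prod.snd_one, zero_smul, one_smul, add_zero, add_right_comm p _ w]
  ring

lemma volume_real_Icc_zero_one_prod : volume.real (Icc (0 : ℝ × ℝ) 1) = 1 := by
  rw [← Prod.mk_zero_zero, ← Prod.mk_one_one, ← Icc_prod_Icc, Measure.volume_eq_prod,
    measureReal_prod_prod]
  simp

lemma boundaryFlux_le (hΩ : IsOpen Ω) (hF : ContDiffOn ℝ 1 F Ω)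
    (hmaps : MapsTo (frame p v w) (Icc 0 1) Ω) (hvw : 0 ≤ cross v w) {K : ℝ}
    (hK : ∀ z ∈ Ω, divergence F z ≤ K) : boundaryFlux F p v w ≤ K * cross v w := by
  calc boundaryFlux F p v w
      = ∫ q in Icc (0 : ℝ × ℝ) 1, divergence F (frame p v w q) * cross v w :=
        boundaryFlux_eq_integral_divergence hΩ hF hmaps
    _ ≤ ∫ _ in Icc (0 : ℝ × ℝ) 1, K * cross v w :=
        setIntegral_mono_on (integrableOn_divergence_comp_frame hΩ hF hmaps)
          (integrableOn_const isCompact_Icc.measure_lt_top.ne) measurableSet_Icc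
          fun q hq => mul_le_mul_of_nonneg_right (hK _ (hmaps hq)) hvw
    _ = K * cross v w := by
        rw [setIntegral_const, volume_real_Icc_zero_one_prod, one_smul]

lemma abs_boundaryFlux_le (hΩ : IsOpen Ω) (hF : ContDiffOn ℝ 1 F Ω)
    (hmaps : MapsTo (frame p v w) (Icc 0 1) Ω) {K : ℝ}
    (hK : ∀ z ∈ Ω, |divergence F z| ≤ K) : |boundaryFlux F p v w| ≤ K * |cross v w| := by
  have h := norm_setIntegral_le_of_norm_le_const (μ := volume) isCompact_Icc.measure_lt_top
    (f := fun q => divergence F (frame p v w q) * cross v w) (C := K * |cross v w|)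
    fun q (hq : q ∈ Icc 0 1) => by
      rw [norm_mul]
      exact mul_le_mul_of_nonneg_right (hK _ (hmaps hq)) (abs_nonneg _)
  rwa [volume_real_Icc_zero_one_prod, mul_one, norm_eq_abs,
    ← boundaryFlux_eq_integral_divergence hΩ hF hmaps] at h

end DivergenceTheorem

lemma divergence_add {F G : ℝ × ℝ → ℝ × ℝ} {p : ℝ × ℝ} (hF : DifferentiableAt ℝ F p)
    (hG : DifferentiableAt ℝ G p) : divergence (F + G) p = divergence F p + divergence G p := by
  simp only [divergence, fderiv_add hF hG, add_apply, Prod.fst_add, Prod.snd_add]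
  ring

lemma divergence_neg (F : ℝ × ℝ → ℝ × ℝ) (p : ℝ × ℝ) : divergence (-F) p = -divergence F p := by
  simp only [divergence, fderiv_neg, neg_apply, Prod.fst_neg, Prod.snd_neg]
  ring

lemma divergence_const_sub (n : ℝ × ℝ) (F : ℝ × ℝ → ℝ × ℝ) (p : ℝ × ℝ) :
    divergence (fun q => n - F q) p = -divergence F p := by
  simp only [divergence, fderiv_const_sub, neg_apply, Prod.fst_neg, Prod.snd_neg]
  ring

lemma divergence_smul {g : ℝ × ℝ → ℝ} {F : ℝ × ℝ → ℝ × ℝ} {p : ℝ × ℝ}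
    (hg : DifferentiableAt ℝ g p) (hF : DifferentiableAt ℝ F p) :
    divergence (g • F) p = g p * divergence F p + fderiv ℝ g p (F p) := by
  rw [map_eq_smul_add_smul (fderiv ℝ g p) (F p), divergence, divergence, fderiv_smul hg hF]
  simp only [add_apply, smul_apply, ContinuousLinearMap.smulRight_apply, Prod.fst_add,
    Prod.snd_add, Prod.smul_fst, Prod.smul_snd, smul_eq_mul]
  ring

/-! ### The normalized gradient -/

/-- The area element `W = √(1 + |∇u|²)` of the graph of `u`. -/
def areaElement (u : ℝ × ℝ → ℝ) (p : ℝ × ℝ) : ℝ := √(1 + pdx u p ^ 2 + pdy u p ^ 2)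

/-- The field `∇u / W`. Its divergence is the mean curvature of the graph of `u`. -/
def normalizedGrad (u : ℝ × ℝ → ℝ) (p : ℝ × ℝ) : ℝ × ℝ :=
  (areaElement u p)⁻¹ • (pdx u p, pdy u p)

/-- `u` is a `C²` function on `Ω` whose graph has mean curvature at most `K` in absolute value; the
mean curvature is the sum of the principal curvatures. -/
def HasMeanCurvatureBound (K : ℝ) (Ω : Set (ℝ × ℝ)) (u : ℝ × ℝ → ℝ) : Prop :=
  ContDiffOn ℝ 2 u Ω ∧ ∀ p ∈ Ω, |divergence (normalizedGrad u) p| ≤ K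

lemma areaElement_sq (u : ℝ × ℝ → ℝ) (p : ℝ × ℝ) :
    areaElement u p ^ 2 = 1 + pdx u p ^ 2 + pdy u p ^ 2 := sq_sqrt (by positivity)

lemma areaElement_pos (u : ℝ × ℝ → ℝ) (p : ℝ × ℝ) : 0 < areaElement u p :=
  sqrt_pos.2 (by positivity)

lemma one_le_areaElement (u : ℝ × ℝ → ℝ) (p : ℝ × ℝ) : 1 ≤ areaElement u p :=
  one_le_sqrt.2 (by linarith [sq_nonneg (pdx u p), sq_nonneg (pdy u p)])

lemma euclNorm_normalizedGrad_le_one (u : ℝ × ℝ → ℝ) (p : ℝ × ℝ) :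
    euclNorm (normalizedGrad u p) ≤ 1 := by
  have hW := areaElement_pos u p
  rw [normalizedGrad, euclNorm_smul, abs_of_pos (inv_pos.2 hW), inv_mul_le_one₀ hW]
  exact sqrt_le_sqrt (by simp only; linarith)

lemma fderiv_apply_eq (u : ℝ × ℝ → ℝ) (p v : ℝ × ℝ) :
    fderiv ℝ u p v = v.1 * pdx u p + v.2 * pdy u p :=
  map_eq_smul_add_smul _ v

lemma fderiv_apply_le_areaElement (u : ℝ × ℝ → ℝ) (p : ℝ × ℝ) {n : ℝ × ℝ}
    (hn : euclNorm n ≤ 1) : fderiv ℝ u p n ≤ areaElement u p := by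
  have hgrad : euclNorm (-pdy u p, pdx u p) ≤ areaElement u p :=
    sqrt_le_sqrt (by simp only [neg_sq]; linarith)
  calc fderiv ℝ u p n = cross n (-pdy u p, pdx u p) := by
        rw [fderiv_apply_eq, cross]
        ring
    _ ≤ euclNorm n * euclNorm (-pdy u p, pdx u p) := (le_abs_self _).trans (abs_cross_le _ _)
    _ ≤ euclNorm (-pdy u p, pdx u p) := mul_le_of_le_one_left (euclNorm_nonneg _) hn
    _ ≤ areaElement u p := hgrad

lemma fderiv_apply_normalizedGrad (u : ℝ × ℝ → ℝ) (p : ℝ × ℝ) :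
    fderiv ℝ u p (normalizedGrad u p) = areaElement u p - (areaElement u p)⁻¹ := by
  have hW := (areaElement_pos u p).ne'
  rw [fderiv_apply_eq, normalizedGrad]
  simp only [Prod.smul_mk, smul_eq_mul]
  field_simp
  linarith [areaElement_sq u p]

/-- This is why a field that moves from `∇u / W` to `n` as `u` increases has divergence bounded
above, however steep `u` is. -/
lemma fderiv_apply_sub_normalizedGrad_le_one (u : ℝ × ℝ → ℝ) (p : ℝ × ℝ) {n : ℝ × ℝ}
    (hn : euclNorm n ≤ 1) : fderiv ℝ u p (n - normalizedGrad u p) ≤ 1 := by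
  have h₁ := fderiv_apply_le_areaElement u p hn
  have h₂ := inv_le_one_of_one_le₀ (one_le_areaElement u p)
  rw [map_sub, fderiv_apply_normalizedGrad]
  linarith

lemma normalizedGrad_neg (u : ℝ × ℝ → ℝ) : normalizedGrad (-u) = -normalizedGrad u := by
  funext p
  have h : fderiv ℝ (-u) p = -fderiv ℝ u p := fderiv_neg
  simp [normalizedGrad, areaElement, pdx, pdy, h]

section Regularity

variable {u : ℝ × ℝ → ℝ} {p : ℝ × ℝ}

lemma contDiffAt_pdx (hu : ContDiffAt ℝ 2 u p) : ContDiffAt ℝ 1 (pdx u) p :=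
  (hu.fderiv_right (m := 1) (by norm_num)).clm_apply contDiffAt_const

lemma contDiffAt_pdy (hu : ContDiffAt ℝ 2 u p) : ContDiffAt ℝ 1 (pdy u) p :=
  (hu.fderiv_right (m := 1) (by norm_num)).clm_apply contDiffAt_const

lemma contDiffAt_areaElement (hu : ContDiffAt ℝ 2 u p) : ContDiffAt ℝ 1 (areaElement u) p :=
  ((contDiffAt_const.add ((contDiffAt_pdx hu).pow 2)).add ((contDiffAt_pdy hu).pow 2)).sqrt
    (by positivity)

lemma contDiffAt_normalizedGrad (hu : ContDiffAt ℝ 2 u p) : ContDiffAt ℝ 1 (normalizedGrad u) p :=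
  ((contDiffAt_areaElement hu).inv (areaElement_pos u p).ne').smul
    ((contDiffAt_pdx hu).prodMk (contDiffAt_pdy hu))

lemma pdx_pdy_eq_pdy_pdx (hu : ContDiffAt ℝ 2 u p) : pdx (pdy u) p = pdy (pdx u) p := by
  have hd : DifferentiableAt ℝ (fderiv ℝ u) p :=
    (hu.fderiv_right (m := 1) (by norm_num)).differentiableAt one_ne_zero
  have h : ∀ v w : ℝ × ℝ,
      fderiv ℝ (fun q => fderiv ℝ u q v) p w = fderiv ℝ (fderiv ℝ u) p w v := fun v w => by
    rw [fderiv_clm_apply hd (differentiableAt_const v)]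
    simp
  exact (h _ _).trans (((hu.isSymmSndFDerivAt (by simp)) _ _).trans (h _ _).symm)

lemma areaElement_mul_fderiv_areaElement (hu : ContDiffAt ℝ 2 u p) (v : ℝ × ℝ) :
    areaElement u p * fderiv ℝ (areaElement u) p v =
      pdx u p * fderiv ℝ (pdx u) p v + pdy u p * fderiv ℝ (pdy u) p v := by
  have hx := ((contDiffAt_pdx hu).differentiableAt one_ne_zero).hasFDerivAt
  have hy := ((contDiffAt_pdy hu).differentiableAt one_ne_zero).hasFDerivAt
  have hW := ((contDiffAt_areaElement hu).differentiableAt one_ne_zero).hasFDerivAt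
  have h : HasFDerivAt (fun q => areaElement u q ^ 2) _ p := hW.pow 2
  have h' : HasFDerivAt (fun q => 1 + pdx u q ^ 2 + pdy u q ^ 2) _ p :=
    ((hx.pow 2).const_add 1).add (hy.pow 2)
  simp only [areaElement_sq] at h
  have hv := congr($(h.unique h') v)
  simp only [add_apply, smul_apply, smul_eq_mul, nsmul_eq_mul, Nat.cast_ofNat, Nat.add_one_sub_one,
    pow_one] at hv
  linarith

lemma divergence_normalizedGrad (hu : ContDiffAt ℝ 2 u p) :
    divergence (normalizedGrad u) p =
      ((1 + pdy u p ^ 2) * pdx (pdx u) p - 2 * pdx u p * pdy u p * pdy (pdx u) p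
        + (1 + pdx u p ^ 2) * pdy (pdy u) p) / areaElement u p ^ 3 := by
  have hW := (areaElement_pos u p).ne'
  have hx := (contDiffAt_pdx hu).differentiableAt one_ne_zero
  have hy := (contDiffAt_pdy hu).differentiableAt one_ne_zero
  have hdW := (contDiffAt_areaElement hu).differentiableAt one_ne_zero
  have hgrad : divergence (fun q => (pdx u q, pdy u q)) p = pdx (pdx u) p + pdy (pdy u) p := by
    rw [divergence, hx.fderiv_prodMk hy]
    rfl
  have hinv : fderiv ℝ (areaElement u)⁻¹ p =
      -(areaElement u p ^ 2)⁻¹ • fderiv ℝ (areaElement u) p :=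
    ((hasDerivAt_inv hW).comp_hasFDerivAt p hdW.hasFDerivAt).fderiv
  have hsmul : normalizedGrad u = (areaElement u)⁻¹ • fun q => (pdx u q, pdy u q) := rfl
  have hDW : areaElement u p * fderiv ℝ (areaElement u) p (pdx u p, pdy u p) =
      pdx u p * (pdx u p * pdx (pdx u) p + pdy u p * pdy (pdx u) p) +
        pdy u p * (pdx u p * pdy (pdx u) p + pdy u p * pdy (pdy u) p) := by
    rw [areaElement_mul_fderiv_areaElement hu, fderiv_apply_eq, fderiv_apply_eq,
      pdx_pdy_eq_pdy_pdx hu]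
  rw [hsmul, divergence_smul (hdW.inv hW) (hx.prodMk hy), hgrad, hinv, smul_apply, smul_eq_mul,
    Pi.inv_apply]
  field_simp
  linear_combination (pdx (pdx u) p + pdy (pdy u) p) * areaElement_sq u p - hDW

end Regularity

namespace HasMeanCurvatureBound

variable {K : ℝ} {Ω : Set (ℝ × ℝ)} {u : ℝ × ℝ → ℝ}

lemma neg (hu : HasMeanCurvatureBound K Ω u) : HasMeanCurvatureBound K Ω (-u) :=
  ⟨hu.1.neg, fun p hp => by
    rw [normalizedGrad_neg, divergence_neg, abs_neg]
    exact hu.2 p hp⟩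

lemma nonneg (hu : HasMeanCurvatureBound K Ω u) (hΩ : Ω.Nonempty) : 0 ≤ K :=
  let ⟨p, hp⟩ := hΩ
  (abs_nonneg _).trans (hu.2 p hp)

lemma contDiffOn_normalizedGrad (hu : HasMeanCurvatureBound K Ω u) (hΩ : IsOpen Ω) :
    ContDiffOn ℝ 1 (normalizedGrad u) Ω := fun _ hp =>
  (contDiffAt_normalizedGrad (hu.1.contDiffAt (hΩ.mem_nhds hp))).contDiffWithinAt

end HasMeanCurvatureBound

lemma IsTranslatorOn.hasMeanCurvatureBound_one {Ω : Set (ℝ × ℝ)} {u : ℝ × ℝ → ℝ}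
    (hu : IsTranslatorOn Ω u) (hΩ : IsOpen Ω) : HasMeanCurvatureBound 1 Ω u := by
  have hC2 : ContDiffOn ℝ 2 u Ω := hu.1.of_le (by norm_cast)
  refine ⟨hC2, fun p hp => ?_⟩
  have hW := areaElement_pos u p
  have hdiv : divergence (normalizedGrad u) p = (areaElement u p)⁻¹ := by
    rw [divergence_normalizedGrad (hC2.contDiffAt (hΩ.mem_nhds hp)), hu.2 p hp, ← areaElement_sq]
    field_simp
  rw [hdiv, abs_of_pos (inv_pos.2 hW)]
  exact inv_le_one_of_one_le₀ (one_le_areaElement u p)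

/-! ### Flux through a side with infinite boundary values -/

lemma deriv_smoothTransition_eq_zero {t : ℝ} (ht : t ∉ Icc (0 : ℝ) 1) :
    deriv smoothTransition t = 0 := by
  rcases not_and_or.1 ht with h | h
  · have hzero : smoothTransition =ᶠ[𝓝 t] fun _ => 0 :=
      (eventually_lt_nhds (not_le.1 h)).mono fun _ hx => smoothTransition.zero_of_nonpos hx.le
    rw [hzero.deriv_eq, deriv_const]
  · have hone : smoothTransition =ᶠ[𝓝 t] fun _ => 1 :=
      (eventually_gt_nhds (not_le.1 h)).mono fun _ hx => smoothTransition.one_of_one_le hx.le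
    rw [hone.deriv_eq, deriv_const]

lemma exists_deriv_smoothTransition_le : ∃ C, ∀ t, deriv smoothTransition t ≤ C :=
  have hcont : Continuous (deriv smoothTransition) :=
    (smoothTransition.contDiff (n := 1)).continuous_deriv le_rfl
  let ⟨C, hC⟩ := hcont.bounded_above_of_compact_support
    (HasCompactSupport.intro isCompact_Icc fun _ => deriv_smoothTransition_eq_zero)
  ⟨C, fun t => (le_abs_self _).trans (hC t)⟩

/-- The field that moves from `∇u / W` to the constant field `n` as `u` increases from `k` to
`k + 1`. -/
def calibratedField (u : ℝ × ℝ → ℝ) (k : ℝ) (n : ℝ × ℝ) : ℝ × ℝ → ℝ × ℝ :=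
  normalizedGrad u + (fun p => smoothTransition (u p - k)) • (fun p => n - normalizedGrad u p)

section CalibratedField

variable {Ω : Set (ℝ × ℝ)} {u : ℝ × ℝ → ℝ} {K k C : ℝ} {n p : ℝ × ℝ}

lemma calibratedField_eq_normalizedGrad (hp : u p ≤ k) :
    calibratedField u k n p = normalizedGrad u p := by
  simp [calibratedField, smoothTransition.zero_of_nonpos (sub_nonpos.2 hp)]

lemma calibratedField_eq_const (hp : k + 1 ≤ u p) : calibratedField u k n p = n := by
  simp [calibratedField, smoothTransition.one_of_one_le (le_sub_iff_add_le'.2 hp)]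

lemma abs_cross_normalizedGrad_le (u : ℝ × ℝ → ℝ) (p e : ℝ × ℝ) :
    |cross (normalizedGrad u p) e| ≤ euclNorm e :=
  (abs_cross_le _ e).trans
    (mul_le_of_le_one_left (euclNorm_nonneg e) (euclNorm_normalizedGrad_le_one u p))

lemma abs_cross_calibratedField_le (hn : euclNorm n ≤ 1) (e : ℝ × ℝ) :
    |cross (calibratedField u k n p) e| ≤ euclNorm e := by
  set f := smoothTransition (u p - k) with hf
  have h₀ : 0 ≤ f := smoothTransition.nonneg _
  have h₁ : 0 ≤ 1 - f := sub_nonneg.2 (smoothTransition.le_one _)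
  have hsplit : cross (calibratedField u k n p) e =
      (1 - f) * cross (normalizedGrad u p) e + f * cross n e := by
    simp only [calibratedField, cross, Pi.add_apply, Pi.smul_apply', Prod.fst_add,
      Prod.snd_add, Prod.smul_fst, Prod.smul_snd, Prod.fst_sub, Prod.snd_sub, smul_eq_mul, ← hf]
    ring
  have hX := abs_cross_normalizedGrad_le u p e
  have hN : |cross n e| ≤ euclNorm e :=
    (abs_cross_le n e).trans (mul_le_of_le_one_left (euclNorm_nonneg e) hn)
  calc |cross (calibratedField u k n p) e|
      ≤ (1 - f) * |cross (normalizedGrad u p) e| + f * |cross n e| := by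
        rw [hsplit]
        refine (abs_add_le _ _).trans_eq ?_
        rw [abs_mul, abs_mul, abs_of_nonneg h₀, abs_of_nonneg h₁]
    _ ≤ (1 - f) * euclNorm e + f * euclNorm e := by gcongr
    _ = euclNorm e := by ring

lemma contDiffOn_calibratedField (hu : HasMeanCurvatureBound K Ω u) (hΩ : IsOpen Ω) (k : ℝ)
    (n : ℝ × ℝ) : ContDiffOn ℝ 1 (calibratedField u k n) Ω :=
  have hX := hu.contDiffOn_normalizedGrad hΩ
  hX.add ((smoothTransition.contDiff.comp_contDiffOn
    ((hu.1.of_le one_le_two).sub contDiffOn_const)).smul (contDiffOn_const.sub hX))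

lemma divergence_calibratedField_le (hu : HasMeanCurvatureBound K Ω u) (hΩ : IsOpen Ω)
    (hC : ∀ t, deriv smoothTransition t ≤ C) (hn : euclNorm n ≤ 1) (hp : p ∈ Ω) :
    divergence (calibratedField u k n) p ≤ K + C := by
  set f : ℝ × ℝ → ℝ := fun p => smoothTransition (u p - k) with hf
  have hdu : DifferentiableAt ℝ u p :=
    (hu.1.contDiffAt (hΩ.mem_nhds hp)).differentiableAt two_ne_zero
  have hX : DifferentiableAt ℝ (normalizedGrad u) p :=
    ((hu.contDiffOn_normalizedGrad hΩ).contDiffAt (hΩ.mem_nhds hp)).differentiableAt one_ne_zero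
  have hdf : HasFDerivAt f (deriv smoothTransition (u p - k) • fderiv ℝ u p) p :=
    ((smoothTransition.contDiff (n := 1)).differentiable one_ne_zero _).hasDerivAt.comp_hasFDerivAt
      p (hdu.hasFDerivAt.sub_const k)
  have hdiv : divergence (calibratedField u k n) p = (1 - f p) * divergence (normalizedGrad u) p +
      deriv smoothTransition (u p - k) * fderiv ℝ u p (n - normalizedGrad u p) := by
    rw [calibratedField, ← hf, divergence_add hX (hdf.differentiableAt.smul (hX.const_sub n)),
      divergence_smul hdf.differentiableAt (hX.const_sub n), divergence_const_sub, hdf.fderiv,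
      smul_apply, smul_eq_mul]
    ring
  have h₁ : (1 - f p) * divergence (normalizedGrad u) p ≤ K :=
    calc (1 - f p) * divergence (normalizedGrad u) p
        ≤ (1 - f p) * |divergence (normalizedGrad u) p| :=
          mul_le_mul_of_nonneg_left (le_abs_self _) (sub_nonneg.2 (smoothTransition.le_one _))
      _ ≤ |divergence (normalizedGrad u) p| :=
          mul_le_of_le_one_left (abs_nonneg _) (sub_le_self _ (smoothTransition.nonneg _))
      _ ≤ K := hu.2 p hp
  have h₂ : deriv smoothTransition (u p - k) * fderiv ℝ u p (n - normalizedGrad u p) ≤ C :=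
    (mul_le_of_le_one_right smoothTransition.monotone.deriv_nonneg
      (fderiv_apply_sub_normalizedGrad_le_one u p hn)).trans (hC _)
  rw [hdiv]
  exact add_le_add h₁ h₂

lemma cross_sub_flux_normalizedGrad_le (hu : HasMeanCurvatureBound K Ω u) (hΩ : IsOpen Ω)
    (hC : ∀ t, deriv smoothTransition t ≤ C) (hn : euclNorm n ≤ 1) {v w : ℝ × ℝ}
    (hmaps : MapsTo (frame p v w) (Icc 0 1) Ω) (hvw : 0 ≤ cross v w)
    (hlow : ∀ t ∈ Icc (0 : ℝ) 1, k + 1 ≤ u (p + t • v))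
    (hhigh : ∀ t ∈ Icc (0 : ℝ) 1, u (p + w + t • v) ≤ k) :
    cross n v - flux (normalizedGrad u) (p + w) v ≤ (K + C) * cross v w + 2 * euclNorm w := by
  have hdiv := boundaryFlux_le hΩ (contDiffOn_calibratedField hu hΩ k n) hmaps hvw
    fun z hz => divergence_calibratedField_le hu hΩ hC hn hz
  have hside : ∀ q, |flux (calibratedField u k n) q w| ≤ euclNorm w := fun q =>
    abs_flux_le fun t _ => abs_cross_calibratedField_le hn w
  have hfirst : flux (calibratedField u k n) p v = cross n v := by
    rw [← flux_const n p v]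
    exact flux_congr fun t ht => calibratedField_eq_const (hlow t ht)
  have hsecond : flux (calibratedField u k n) (p + w) v = flux (normalizedGrad u) (p + w) v :=
    flux_congr fun t ht => calibratedField_eq_normalizedGrad (hhigh t ht)
  rw [boundaryFlux, add_right_comm p v w, flux_reverse, flux_reverse, hfirst, hsecond] at hdiv
  linarith [abs_le.1 (hside p), abs_le.1 (hside (p + v))]

end CalibratedField

section InfiniteSide

variable {Ω : Set (ℝ × ℝ)} {u : ℝ × ℝ → ℝ} {K C : ℝ} {n p v w : ℝ × ℝ}

lemma eventually_forall_le_comp_frame (hmaps : MapsTo (frame p v w) (Ioo 0 1 ×ˢ Ioo 0 1) Ω)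
    (hedge : ∀ t ∈ Ioo (0 : ℝ) 1, Tendsto u (𝓝[Ω] (frame p v w (t, 0))) atTop) {S : Set ℝ}
    (hS : IsCompact S) (hS' : S ⊆ Ioo 0 1) (M : ℝ) :
    ∀ᶠ τ in 𝓝[>] 0, ∀ t ∈ S, M ≤ u (frame p v w (t, τ)) := by
  have hnear : ∀ᶠ τ in 𝓝 (0 : ℝ), ∀ t ∈ S, τ ∈ Ioo 0 1 → M ≤ u (frame p v w (t, τ)) := by
    refine hS.eventually_forall_of_forall_eventually
      (P := fun τ t => τ ∈ Ioo 0 1 → M ≤ u (frame p v w (t, τ))) fun t ht => ?_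
    have hcont : Tendsto (fun z : ℝ × ℝ => frame p v w z.swap) (𝓝 (0, t))
        (𝓝 (frame p v w (t, 0))) :=
      ((continuous_frame p v w).comp continuous_swap).tendsto (0, t)
    have hsnd : ∀ᶠ z : ℝ × ℝ in 𝓝 (0, t), z.2 ∈ Ioo 0 1 :=
      continuous_snd.tendsto (0, t) (isOpen_Ioo.mem_nhds (hS' ht))
    have hle := eventually_nhdsWithin_iff.1 ((hedge t (hS' ht)).eventually_ge_atTop M)
    filter_upwards [hcont.eventually hle, hsnd] with z hz hz₂ hz₁
    exact hz (hmaps ⟨hz₂, hz₁⟩)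
  filter_upwards [hnear.filter_mono nhdsWithin_le_nhds, Ioo_mem_nhdsGT zero_lt_one] with τ h hτ t ht
  exact h t ht hτ

lemma exists_forall_comp_frame_le (hu : ContinuousOn u Ω)
    (hmaps : MapsTo (frame p v w) (Ioo 0 1 ×ˢ Ioo 0 1) Ω) {S : Set ℝ} (hS : IsCompact S)
    (hS' : S ⊆ Ioo 0 1) {τ : ℝ} (hτ : τ ∈ Ioo (0 : ℝ) 1) :
    ∃ k, ∀ t ∈ S, u (frame p v w (t, τ)) ≤ k := by
  have hcont : ContinuousOn (fun t => u (frame p v w (t, τ))) S :=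
    hu.comp ((continuous_frame p v w).comp (by fun_prop)).continuousOn
      fun t ht => hmaps ⟨hS' ht, hτ⟩
  obtain ⟨k, hk⟩ := hS.bddAbove_image hcont
  exact ⟨k, fun t ht => hk (mem_image_of_mem _ ht)⟩

lemma cross_sub_flux_normalizedGrad_inset_le (hu : HasMeanCurvatureBound K Ω u) (hΩ : IsOpen Ω)
    (hC : ∀ t, deriv smoothTransition t ≤ C) (hn : euclNorm n ≤ 1)
    (hmaps : MapsTo (frame p v w) (Ioo 0 1 ×ˢ Ioo 0 1) Ω) (hvw : 0 ≤ cross v w)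
    (hedge : ∀ t ∈ Ioo (0 : ℝ) 1, Tendsto u (𝓝[Ω] (frame p v w (t, 0))) atTop) {r : ℝ}
    (hr : r ∈ Ioo (0 : ℝ) (1 / 2)) :
    (1 - 2 * r) * cross n v - flux (normalizedGrad u) (frame p v w (r, r)) ((1 - 2 * r) • v) ≤
      r * ((K + C) * cross v w + 2 * euclNorm w) := by
  obtain ⟨hr₀, hr₁⟩ := hr
  have hsub : Icc r (1 - r) ⊆ Ioo 0 1 := Icc_subset_Ioo hr₀ (by linarith)
  have hside : ∀ t ∈ Icc (0 : ℝ) 1, r + t * (1 - 2 * r) ∈ Icc r (1 - r) := fun t ht =>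
    ⟨by nlinarith [ht.1], by nlinarith [ht.2]⟩
  obtain ⟨k, hk⟩ := exists_forall_comp_frame_le hu.1.continuousOn hmaps isCompact_Icc hsub
    ⟨hr₀, hr₁.trans one_half_lt_one⟩
  obtain ⟨τ, hτ, hτ₀, hτr⟩ := ((eventually_forall_le_comp_frame hmaps hedge isCompact_Icc hsub
    (k + 1)).and (Ioo_mem_nhdsGT hr₀)).exists
  have htop : frame p v w (r, τ) + (r - τ) • w = frame p v w (r, r) := by
    simp only [frame]; module
  have hbox := cross_sub_flux_normalizedGrad_le (k := k) (p := frame p v w (r, τ))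
    (v := (1 - 2 * r) • v) (w := (r - τ) • w) hu hΩ hC hn
    (mapsTo_frame_frame hmaps hr₀ hτ₀ (by linarith) (by linarith) (by linarith) (by linarith))
    (by rw [cross_smul_smul]; exact mul_nonneg (mul_nonneg (by linarith) (by linarith)) hvw)
    (fun t ht => by
      convert hτ _ (hside t ht) using 2
      simp only [frame]; module)
    (fun t ht => by
      rw [htop]
      convert hk _ (hside t ht) using 2
      simp only [frame]; module)
  rw [htop, cross_smul_right, cross_smul_smul, euclNorm_smul, abs_of_pos (sub_pos.2 hτr)] at hbox
  have hK : 0 ≤ K := hu.nonneg ⟨_, hmaps (x := (r, r)) ⟨⟨hr₀, by linarith⟩, hr₀, by linarith⟩⟩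
  have hKC : 0 ≤ K + C := add_nonneg hK (smoothTransition.monotone.deriv_nonneg.trans (hC 0))
  have harea : (1 - 2 * r) * (r - τ) ≤ r := by nlinarith
  have hw := euclNorm_nonneg w
  calc (1 - 2 * r) * cross n v - flux (normalizedGrad u) (frame p v w (r, r)) ((1 - 2 * r) • v)
      ≤ (K + C) * ((1 - 2 * r) * (r - τ) * cross v w) + 2 * ((r - τ) * euclNorm w) := hbox
    _ ≤ (K + C) * (r * cross v w) + 2 * (r * euclNorm w) := by
        gcongr
        exact sub_le_self r hτ₀.le
    _ = r * ((K + C) * cross v w + 2 * euclNorm w) := by ring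

lemma tendsto_flux_of_tendsto_atTop (hu : HasMeanCurvatureBound K Ω u) (hΩ : IsOpen Ω)
    (hmaps : MapsTo (frame p v w) (Ioo 0 1 ×ˢ Ioo 0 1) Ω) (hvw : 0 ≤ cross v w)
    (hedge : ∀ t ∈ Ioo (0 : ℝ) 1, Tendsto u (𝓝[Ω] (frame p v w (t, 0))) atTop) :
    Tendsto (fun r => flux (normalizedGrad u) (frame p v w (r, r)) ((1 - 2 * r) • v)) (𝓝[>] 0)
      (𝓝 (euclNorm v)) := by
  obtain ⟨C, hC⟩ := exists_deriv_smoothTransition_le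
  obtain ⟨n, hn, hnv⟩ := exists_cross_eq_euclNorm v
  set B := (K + C) * cross v w + 2 * euclNorm w
  have hlow : Tendsto (fun r => (1 - 2 * r) * euclNorm v - r * B) (𝓝[>] 0) (𝓝 (euclNorm v)) :=
    Tendsto.mono_left (Continuous.tendsto' (by fun_prop) _ _ (by simp)) nhdsWithin_le_nhds
  have hhigh : Tendsto (fun r => |1 - 2 * r| * euclNorm v) (𝓝[>] 0) (𝓝 (euclNorm v)) :=
    Tendsto.mono_left (Continuous.tendsto' (by fun_prop) _ _ (by simp)) nhdsWithin_le_nhds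
  refine tendsto_of_tendsto_of_tendsto_of_le_of_le' hlow hhigh ?_ (Eventually.of_forall fun r => ?_)
  · filter_upwards [Ioo_mem_nhdsGT one_half_pos] with r hr
    have h := cross_sub_flux_normalizedGrad_inset_le hu hΩ hC hn hmaps hvw hedge hr
    rw [hnv] at h
    linarith
  · rw [← euclNorm_smul]
    exact (le_abs_self _).trans (abs_flux_le fun t _ => abs_cross_normalizedGrad_le u _ _)

lemma tendsto_flux_of_tendsto_atBot (hu : HasMeanCurvatureBound K Ω u) (hΩ : IsOpen Ω)
    (hmaps : MapsTo (frame p v w) (Ioo 0 1 ×ˢ Ioo 0 1) Ω) (hvw : 0 ≤ cross v w)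
    (hedge : ∀ t ∈ Ioo (0 : ℝ) 1, Tendsto u (𝓝[Ω] (frame p v w (t, 0))) atBot) :
    Tendsto (fun r => flux (normalizedGrad u) (frame p v w (r, r)) ((1 - 2 * r) • v)) (𝓝[>] 0)
      (𝓝 (-euclNorm v)) := by
  have h := tendsto_flux_of_tendsto_atTop hu.neg hΩ hmaps hvw
    fun t ht => tendsto_neg_atBot_atTop.comp (hedge t ht)
  simpa only [normalizedGrad_neg, flux_neg_field, neg_neg] using h.neg

end InfiniteSide

/-! ### Scherk boundary values on a parallelogram -/

/-- On the parallelogram `Ω` with vertex `p` and edge vectors `v`, `w`, the function `u` has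
boundary value `-∞` on the open sides parallel to `v` and `+∞` on the open sides parallel to `w`. -/
structure HasScherkBoundaryValues (Ω : Set (ℝ × ℝ)) (p v w : ℝ × ℝ) (u : ℝ × ℝ → ℝ) : Prop where
  bottom : ∀ t ∈ Ioo (0 : ℝ) 1, Tendsto u (𝓝[Ω] (frame p v w (t, 0))) atBot
  top : ∀ t ∈ Ioo (0 : ℝ) 1, Tendsto u (𝓝[Ω] (frame p v w (t, 1))) atBot
  left : ∀ t ∈ Ioo (0 : ℝ) 1, Tendsto u (𝓝[Ω] (frame p v w (0, t))) atTop
  right : ∀ t ∈ Ioo (0 : ℝ) 1, Tendsto u (𝓝[Ω] (frame p v w (1, t))) atTop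

section Scherk

variable {Ω : Set (ℝ × ℝ)} {u : ℝ × ℝ → ℝ} {K : ℝ} {p v w : ℝ × ℝ}

lemma HasScherkBoundaryValues.tendsto_boundaryFlux (hbv : HasScherkBoundaryValues Ω p v w u)
    (hu : HasMeanCurvatureBound K Ω u) (hΩ : IsOpen Ω)
    (hmaps : MapsTo (frame p v w) (Ioo 0 1 ×ˢ Ioo 0 1) Ω) (hvw : 0 ≤ cross v w) :
    Tendsto (fun r => boundaryFlux (normalizedGrad u) (frame p v w (r, r)) ((1 - 2 * r) • v)
      ((1 - 2 * r) • w)) (𝓝[>] 0) (𝓝 (2 * (euclNorm w - euclNorm v))) := by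
  have hsymm : ∀ t ∈ Ioo (0 : ℝ) 1, 1 - t ∈ Ioo (0 : ℝ) 1 := fun t ht =>
    ⟨sub_pos.2 ht.2, sub_lt_self 1 ht.1⟩
  have hmaps₁ := mapsTo_frame_rotate hmaps
  have hmaps₂ := mapsTo_frame_rotate hmaps₁
  have hmaps₃ := mapsTo_frame_rotate hmaps₂
  have hbottom := tendsto_flux_of_tendsto_atBot hu hΩ hmaps hvw hbv.bottom
  have hright := tendsto_flux_of_tendsto_atTop hu hΩ hmaps₁ (by rwa [cross_rotate])
    fun t ht => by simpa only [frame_rotate, sub_zero] using hbv.right t ht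
  have htop := tendsto_flux_of_tendsto_atBot hu hΩ hmaps₂ (by rwa [cross_rotate, cross_rotate])
    fun t ht => by simpa only [frame_rotate, sub_zero] using hbv.top _ (hsymm t ht)
  have hleft := tendsto_flux_of_tendsto_atTop hu hΩ hmaps₃
    (by rwa [cross_rotate, cross_rotate, cross_rotate])
    fun t ht => by simpa only [frame_rotate, sub_zero, sub_self] using hbv.left _ (hsymm t ht)
  have hsum := ((hbottom.add hright).add htop).add hleft
  simp only [frame_rotate, sub_sub_cancel] at hsum
  simp only [smul_neg, euclNorm_neg] at hsum
  convert hsum using 2 with r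
  · exact boundaryFlux_frame (normalizedGrad u) p v w r
  · ring

theorem HasScherkBoundaryValues.abs_euclNorm_sub_le (hbv : HasScherkBoundaryValues Ω p v w u)
    (hu : HasMeanCurvatureBound K Ω u) (hΩ : IsOpen Ω)
    (hmaps : MapsTo (frame p v w) (Ioo 0 1 ×ˢ Ioo 0 1) Ω) (hvw : 0 ≤ cross v w) :
    2 * |euclNorm w - euclNorm v| ≤ K * cross v w := by
  have hlim := (hbv.tendsto_boundaryFlux hu hΩ hmaps hvw).abs
  rw [abs_mul, abs_two] at hlim
  refine le_of_tendsto hlim ?_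
  filter_upwards [Ioo_mem_nhdsGT one_half_pos] with r ⟨hr₀, hr₁⟩
  have hmaps' := mapsTo_frame_frame (c := 1 - 2 * r) (d := 1 - 2 * r) hmaps hr₀ hr₀ (by linarith)
    (by linarith) (by linarith) (by linarith)
  have hK : 0 ≤ K := hu.nonneg ⟨_, hmaps' (left_mem_Icc.2 zero_le_one)⟩
  have hshrink : (1 - 2 * r) * (1 - 2 * r) ≤ 1 := by nlinarith
  calc |boundaryFlux (normalizedGrad u) (frame p v w (r, r)) ((1 - 2 * r) • v) ((1 - 2 * r) • w)|
      ≤ K * |cross ((1 - 2 * r) • v) ((1 - 2 * r) • w)| :=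
        abs_boundaryFlux_le hΩ (hu.contDiffOn_normalizedGrad hΩ) hmaps' hu.2
    _ = K * ((1 - 2 * r) * (1 - 2 * r) * cross v w) := by
        rw [cross_smul_smul, abs_of_nonneg (mul_nonneg (mul_self_nonneg _) hvw)]
    _ ≤ K * cross v w := by gcongr; exact mul_le_of_le_one_left hvw hshrink

end Scherk

lemma isOpen_pgram (α w L : ℝ) : IsOpen (Pgram α w L) := by
  have hslope : Continuous fun p : ℝ × ℝ => p.2 * cos α / sin α := by fun_prop
  exact (isOpen_lt continuous_const continuous_snd).inter
    ((isOpen_lt continuous_snd continuous_const).inter ((isOpen_lt hslope continuous_fst).inter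
      (isOpen_lt continuous_fst (continuous_const.add hslope))))

section Pgram

variable {α w L : ℝ}

lemma frame_pgram (α w L s t : ℝ) :
    frame 0 (L, 0) (w * cos α / sin α, w) (s, t) = (s * L + t * w * cos α / sin α, t * w) := by
  ext <;> simp only [frame, Prod.smul_mk, Prod.mk_add_mk, zero_add, smul_eq_mul] <;> ring

lemma mapsTo_frame_pgram (α : ℝ) (hw : 0 < w) (hL : 0 < L) :
    MapsTo (frame 0 (L, 0) (w * cos α / sin α, w)) (Ioo 0 1 ×ˢ Ioo 0 1) (Pgram α w L) := by
  rintro ⟨s, t⟩ ⟨⟨hs₀, hs₁⟩, ht₀, ht₁⟩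
  rw [frame_pgram]
  exact ⟨mul_pos ht₀ hw, mul_lt_of_lt_one_left hw ht₁, lt_add_of_pos_left _ (mul_pos hs₀ hL),
    add_lt_add_left (mul_lt_of_lt_one_left hL hs₁) _⟩

lemma euclNorm_mul_cot (hα : α ∈ Ioo 0 π) (hw : 0 < w) :
    euclNorm (w * cos α / sin α, w) = w / sin α := by
  have hsin := sin_pos_of_mem_Ioo hα
  rw [euclNorm, sqrt_eq_iff_mul_self_eq_of_pos (div_pos hw hsin)]
  field_simp
  exact (cos_sq_add_sin_sq α).symm

lemma ScherkBVP.hasScherkBoundaryValues {u : ℝ × ℝ → ℝ} (hu : ScherkBVP α w L u) (hw : 0 < w)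
    (hL : 0 < L) :
    HasScherkBoundaryValues (Pgram α w L) 0 (L, 0) (w * cos α / sin α, w) u := by
  obtain ⟨-, hbottom, htop, hleft, hright⟩ := hu
  refine ⟨fun t ⟨ht₀, ht₁⟩ => ?_, fun t ⟨ht₀, ht₁⟩ => ?_, fun t ⟨ht₀, ht₁⟩ => ?_,
    fun t ⟨ht₀, ht₁⟩ => ?_⟩
  · simpa [frame_pgram] using hbottom (t * L) (mul_pos ht₀ hL) (mul_lt_of_lt_one_left hL ht₁)
  · simpa [frame_pgram] using htop (t * L + w * cos α / sin α)
      (lt_add_of_pos_left _ (mul_pos ht₀ hL)) (add_lt_add_left (mul_lt_of_lt_one_left hL ht₁) _)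
  · simpa [frame_pgram] using hleft (t * w) (mul_pos ht₀ hw) (mul_lt_of_lt_one_left hw ht₁)
  · simpa [frame_pgram] using hright (t * w) (mul_pos ht₀ hw) (mul_lt_of_lt_one_left hw ht₁)

lemma abs_div_sub_sin_le {K : ℝ} {u : ℝ × ℝ → ℝ} (hα : α ∈ Ioo 0 π) (hw : 0 < w) (hL : 0 < L)
    (hu : HasMeanCurvatureBound K (Pgram α w L) u)
    (hbv : HasScherkBoundaryValues (Pgram α w L) 0 (L, 0) (w * cos α / sin α, w) u) :
    |w / L - sin α| ≤ K * w * sin α / 2 := by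
  have hsin := sin_pos_of_mem_Ioo hα
  have hcross : cross (L, 0) (w * cos α / sin α, w) = L * w := by simp [cross]
  have hnorm : euclNorm (L, 0) = L := by simp [euclNorm, sqrt_sq hL.le]
  have h := hbv.abs_euclNorm_sub_le hu (isOpen_pgram α w L) (mapsTo_frame_pgram α hw hL)
    (by rw [hcross]; positivity)
  rw [hcross, hnorm, euclNorm_mul_cot hα hw] at h
  have hratio : w / L - sin α = (w / sin α - L) * (sin α / L) := by field_simp
  calc |w / L - sin α| = |w / sin α - L| * (sin α / L) := by
        rw [hratio, abs_mul, abs_of_pos (div_pos hsin hL)]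
    _ ≤ K * (L * w) / 2 * (sin α / L) := by
        gcongr
        linarith
    _ = K * w * sin α / 2 := by field_simp

end Pgram

theorem scherk_ratio_tendsto_sin_general (K : ℝ) :
    ∀ ε > (0 : ℝ), ∃ δ > (0 : ℝ), ∀ α ∈ Ioo 0 π, ∀ w L : ℝ, 0 < w → w < δ → 0 < L →
      (∃ u : ℝ × ℝ → ℝ, HasMeanCurvatureBound K (Pgram α w L) u ∧
        HasScherkBoundaryValues (Pgram α w L) 0 (L, 0) (w * cos α / sin α, w) u) →
      |w / L - sin α| < ε := by
  intro ε hε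
  refine ⟨ε / (|K| + 1), by positivity, fun α hα w L hw hwδ hL ⟨u, hu, hbv⟩ => ?_⟩
  rw [lt_div_iff₀ (by positivity)] at hwδ
  have hsin : sin α / 2 ≤ 1 := by linarith [sin_le_one α]
  have hsin₀ := sin_pos_of_mem_Ioo hα
  calc |w / L - sin α| ≤ K * w * (sin α / 2) := by
        rw [← mul_div_assoc]
        exact abs_div_sub_sin_le hα hw hL hu hbv
    _ ≤ |K| * w * 1 := by gcongr; exact le_abs_self K
    _ < ε := by linarith

end

/-- `w / L(α,w) → sin α` as `w → 0`. -/
theorem scherk_ratio_tendsto_sin (α : ℝ) (hα : α ∈ Set.Ioo 0 π) :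
    ∀ ε > (0 : ℝ), ∃ δ > (0 : ℝ), ∀ w L : ℝ, 0 < w → w < δ → 0 < L →
      (∃ u : ℝ × ℝ → ℝ, ScherkBVP α w L u) → |w / L - Real.sin α| < ε := by
  intro ε hε
  obtain ⟨δ, hδ, h⟩ := scherk_ratio_tendsto_sin_general 1 ε hε
  exact ⟨δ, hδ, fun w L hw hwδ hL ⟨u, hu⟩ => h α hα w L hw hwδ hL
    ⟨u, hu.1.hasMeanCurvatureBound_one (isOpen_pgram α w L), hu.hasScherkBoundaryValues hw hL⟩⟩
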